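/- arXiv:2208.12182 — 2 statements merged into one kernel-verified Lean document; each statement's English description precedes it below -/
import Mathlib

section
/- For every ε > 0 there exists N such that for all n ≥ N and all families a : Fin n → ℝ with 0 < a_i for every i, whose maximum A = max_i a_i satisfies A ≥ 2^n/n, one has ∫_{|x| ≤ 1/(4A)} (sin(2πx)/(2πx))² · ∏_{i=1}^{n} cos(2π a_i x)² dx ≥ (1 − ε) · (1/2) · (1/A) · 1/√(πn). -/
open Real MeasureTheory Finset

/-- The factor `sin(2πx)/(2πx)`, interpreted as its limit value `1` at `x = 0`. -/
noncomputable def sinc2pi (x : ℝ) : ℝ :=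
  if x = 0 then 1 else Real.sin (2 * π * x) / (2 * π * x)

/-!
On `|x| ≤ 1/(4A)` the angle `2πAx` stays in `[-π/2, π/2]`, where the cosine decreases with the
absolute value of the angle, so every factor `cos(2πaᵢx)²` is at least `cos(2πAx)²`. The sinc
factor is there at least `1 - (π/(2A))²`. What remains is `∫ cos(2πAx)²ⁿ dx`, which a linear change
of variables turns into the Wallis integral `I₂ₙ = ∫₀^π sin²ⁿ`; since `Iₘ Iₘ₊₁ = 2π/(m+1)` and `Iₘ`
decreases in `m`, one has `I₂ₙ ≥ √(2π/(2n+1))`. This gives the lower bound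
`(1 - (π/(2A))²) / (2A √(π(n + 1/2)))`, asymptotic to `1 / (2A √(πn))` as `n, A → ∞`.
-/

open Filter Topology

section WallisIntegral

theorem integral_sin_pow_mul_integral_sin_pow_succ (n : ℕ) :
    (∫ x in 0..π, sin x ^ n) * (∫ x in 0..π, sin x ^ (n + 1)) = 2 * π / (n + 1) := by
  induction n with
  | zero => norm_num [mul_comm]
  | succ n ih =>
    have recurrence : ∫ x in 0..π, sin x ^ (n + 2) =
        (n + 1) / (n + 2) * ∫ x in 0..π, sin x ^ n := by
      simp [integral_sin_pow]
    calc (∫ x in 0..π, sin x ^ (n + 1)) * ∫ x in 0..π, sin x ^ (n + 2)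
        = (n + 1) / (n + 2) * ((∫ x in 0..π, sin x ^ n) * ∫ x in 0..π, sin x ^ (n + 1)) := by
          rw [recurrence]; ring
      _ = 2 * π / ((n + 1 : ℕ) + 1) := by
          rw [ih]; push_cast; field_simp; ring

theorem sqrt_two_mul_pi_div_le_integral_sin_pow (n : ℕ) :
    √(2 * π / (n + 1)) ≤ ∫ x in 0..π, sin x ^ n := by
  have nonneg : 0 ≤ ∫ x in 0..π, sin x ^ n := (integral_sin_pow_pos n).le
  refine sqrt_le_iff.2 ⟨nonneg, ?_⟩
  rw [← integral_sin_pow_mul_integral_sin_pow_succ, sq]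
  exact mul_le_mul_of_nonneg_left (integral_sin_pow_succ_le n) nonneg

theorem integral_cos_two_pi_mul_pow {A : ℝ} (hA : A ≠ 0) (n : ℕ) :
    ∫ x in -(1 / (4 * A))..1 / (4 * A), cos (2 * π * A * x) ^ n =
      (2 * π * A)⁻¹ * ∫ x in 0..π, sin x ^ n := by
  have shift_scale := intervalIntegral.integral_comp_mul_add (a := -(1 / (4 * A)))
    (b := 1 / (4 * A)) (fun x ↦ sin x ^ n) (by positivity : 2 * π * A ≠ 0) (π / 2)
  simp only [sin_add_pi_div_two, smul_eq_mul] at shift_scale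
  rw [shift_scale]
  congr 2 <;> field_simp <;> ring

end WallisIntegral

section Sinc

theorem cos_le_sinc {x : ℝ} (hx : |x| < π / 2) : cos x ≤ sinc x := by
  wlog hx_nonneg : 0 ≤ x generalizing x
  · simpa using this (x := -x) (by rwa [abs_neg]) (by linarith)
  rcases hx_nonneg.eq_or_lt with rfl | hx_pos
  · simp
  have hx_lt : x < π / 2 := (le_abs_self x).trans_lt hx
  have cos_pos : 0 < cos x := cos_pos_of_mem_Ioo ⟨by linarith, hx_lt⟩
  rw [sinc_of_ne_zero hx_pos.ne', le_div_iff₀ hx_pos, mul_comm, ← le_div_iff₀ cos_pos,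
    ← tan_eq_sin_div_cos]
  exact le_tan hx_nonneg hx_lt

theorem one_sub_sq_le_sinc_sq (x : ℝ) : 1 - x ^ 2 ≤ sinc x ^ 2 := by
  rcases le_or_gt 1 |x| with hx | hx
  · have : 1 ≤ x ^ 2 := (one_le_sq_iff_one_le_abs x).2 hx
    exact (sub_nonpos.2 this).trans (sq_nonneg _)
  have hx_lt : |x| < π / 2 := hx.trans (by linarith [pi_gt_three])
  calc 1 - x ^ 2 ≤ 1 - sin x ^ 2 := sub_le_sub_left sin_sq_le_sq 1
    _ = cos x ^ 2 := (cos_sq' x).symm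
    _ ≤ sinc x ^ 2 :=
      pow_le_pow_left₀ (cos_nonneg_of_mem_Icc (abs_le.1 hx_lt.le)) (cos_le_sinc hx_lt) 2

theorem sinc2pi_eq_sinc (x : ℝ) : sinc2pi x = sinc (2 * π * x) := by
  simp [sinc2pi, sinc, pi_ne_zero]

@[fun_prop]
theorem continuous_sinc2pi : Continuous sinc2pi := by
  simp only [funext sinc2pi_eq_sinc]
  fun_prop

end Sinc

theorem cos_sq_le_cos_sq_of_abs_le {x y : ℝ} (hxy : |x| ≤ |y|) (hy : |y| ≤ π / 2) :
    cos y ^ 2 ≤ cos x ^ 2 := by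
  have cos_nonneg : 0 ≤ cos y := cos_nonneg_of_mem_Icc (abs_le.1 hy)
  refine pow_le_pow_left₀ cos_nonneg ?_ 2
  rw [← cos_abs x, ← cos_abs y]
  exact cos_le_cos_of_nonneg_of_le_pi (abs_nonneg x) (by linarith [pi_pos]) hxy

section

variable {ι : Type*} [Fintype ι] {a : ι → ℝ} {A : ℝ}

theorem mul_cos_pow_le_sinc2pi_sq_mul_prod_cos_sq (hA : 0 < A) (ha : ∀ i, |a i| ≤ A) {x : ℝ}
    (hx : |x| ≤ 1 / (4 * A)) :
    (1 - (π / (2 * A)) ^ 2) * cos (2 * π * A * x) ^ (2 * Fintype.card ι) ≤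
      sinc2pi x ^ 2 * ∏ i, cos (2 * π * a i * x) ^ 2 := by
  have angle_le : |2 * π * x| ≤ π / (2 * A) := by
    calc |2 * π * x| = 2 * π * |x| := by rw [abs_mul, abs_of_pos two_pi_pos]
      _ ≤ 2 * π * (1 / (4 * A)) := by gcongr
      _ = π / (2 * A) := by field_simp; norm_num
  have scaled_angle_le : |2 * π * A * x| ≤ π / 2 := by
    calc |2 * π * A * x| = A * |2 * π * x| := by
          rw [mul_right_comm, abs_mul, abs_of_pos hA, mul_comm]
      _ ≤ A * (π / (2 * A)) := by gcongr
      _ = π / 2 := by field_simp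
  have sinc_ge : 1 - (π / (2 * A)) ^ 2 ≤ sinc2pi x ^ 2 := by
    rw [sinc2pi_eq_sinc]
    have sq_le : (2 * π * x) ^ 2 ≤ (π / (2 * A)) ^ 2 :=
      sq_le_sq.2 (angle_le.trans (le_abs_self _))
    exact (sub_le_sub_left sq_le 1).trans (one_sub_sq_le_sinc_sq _)
  have prod_ge : cos (2 * π * A * x) ^ (2 * Fintype.card ι) ≤ ∏ i, cos (2 * π * a i * x) ^ 2 := by
    rw [pow_mul, ← Finset.card_univ, ← Finset.prod_const]
    refine Finset.prod_le_prod (fun _ _ ↦ sq_nonneg _) fun i _ ↦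
      cos_sq_le_cos_sq_of_abs_le ?_ scaled_angle_le
    simp only [abs_mul, abs_of_pos hA]
    gcongr
    exact ha i
  exact mul_le_mul sinc_ge prod_ge (by rw [pow_mul]; positivity) (sq_nonneg _)

theorem mul_integral_sin_pow_le_setIntegral_sinc2pi_sq_mul_prod_cos_sq (hA : 0 < A)
    (ha : ∀ i, |a i| ≤ A) :
    (1 - (π / (2 * A)) ^ 2) * ((2 * π * A)⁻¹ * ∫ x in 0..π, sin x ^ (2 * Fintype.card ι)) ≤
      ∫ x in {x : ℝ | |x| ≤ 1 / (4 * A)}, sinc2pi x ^ 2 * ∏ i, cos (2 * π * a i * x) ^ 2 := by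
  have interval_eq : {x : ℝ | |x| ≤ 1 / (4 * A)} = Set.Icc (-(1 / (4 * A))) (1 / (4 * A)) := by
    simp only [abs_le, Set.Icc_def]
  have endpoints_le : -(1 / (4 * A)) ≤ 1 / (4 * A) := neg_le_self (by positivity)
  rw [← integral_cos_two_pi_mul_pow hA.ne', ← intervalIntegral.integral_const_mul,
    intervalIntegral.integral_of_le endpoints_le, ← integral_Icc_eq_integral_Ioc, interval_eq]
  exact setIntegral_mono_on (Continuous.integrableOn_Icc (by fun_prop))
    (Continuous.integrableOn_Icc (by fun_prop)) measurableSet_Icc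
    fun x hx ↦ mul_cos_pow_le_sinc2pi_sq_mul_prod_cos_sq hA ha (abs_le.2 hx)

theorem le_setIntegral_sinc2pi_sq_mul_prod_cos_sq (hA : 0 < A) (ha : ∀ i, |a i| ≤ A) :
    (1 - (π / (2 * A)) ^ 2) * (1 / 2) * (1 / A) * (1 / √(π * (Fintype.card ι + 1 / 2))) ≤
      ∫ x in {x : ℝ | |x| ≤ 1 / (4 * A)}, sinc2pi x ^ 2 * ∏ i, cos (2 * π * a i * x) ^ 2 := by
  rcases le_total (1 - (π / (2 * A)) ^ 2) 0 with const_nonpos | const_nonneg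
  · calc _ ≤ (0 : ℝ) := by
          simp only [mul_assoc]
          exact mul_nonpos_of_nonpos_of_nonneg const_nonpos (by positivity)
      _ ≤ _ := integral_nonneg fun x ↦ by positivity
  refine le_trans ?_ (mul_integral_sin_pow_le_setIntegral_sinc2pi_sq_mul_prod_cos_sq hA ha)
  have wallis := sqrt_two_mul_pi_div_le_integral_sin_pow (2 * Fintype.card ι)
  have sqrt_eq : √(2 * π / ((2 * Fintype.card ι : ℕ) + 1)) =
      π * (1 / √(π * (Fintype.card ι + 1 / 2))) := by
    rw [sqrt_eq_iff_mul_self_eq_of_pos (by positivity), ← sq, mul_pow, div_pow,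
      sq_sqrt (by positivity)]
    push_cast
    field_simp
  calc _ = (1 - (π / (2 * A)) ^ 2) *
        ((2 * π * A)⁻¹ * (π * (1 / √(π * (Fintype.card ι + 1 / 2))))) := by field_simp
    _ ≤ _ := by rw [← sqrt_eq]; gcongr

end

theorem tendsto_pow_div_natCast_atTop {r : ℝ} (hr : 1 < r) :
    Tendsto (fun n : ℕ ↦ r ^ n / n) atTop atTop := by
  have inv_tendsto : Tendsto (fun n : ℕ ↦ (n : ℝ) / r ^ n) atTop (𝓝[>] 0) := by
    refine tendsto_nhdsWithin_iff.2
      ⟨by simpa using tendsto_pow_const_div_const_pow_of_one_lt 1 hr, ?_⟩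
    filter_upwards [eventually_gt_atTop 0] with n hn
    have : 0 < r := one_pos.trans hr
    exact Set.mem_Ioi.2 (by positivity)
  exact inv_tendsto.inv_tendsto_nhdsGT_zero.congr fun n ↦ inv_div _ _

theorem tendsto_one_sub_sq_mul_sqrt_div_add_half :
    Tendsto (fun p : ℕ × ℝ ↦ (1 - (π / (2 * p.2)) ^ 2) * √(p.1 / (p.1 + 1 / 2))) atTop (𝓝 1) := by
  rw [← prod_atTop_atTop_eq]
  have sinc_factor : Tendsto (fun A : ℝ ↦ 1 - (π / (2 * A)) ^ 2) atTop (𝓝 1) := by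
    simpa using ((tendsto_id.const_mul_atTop two_pos).const_div_atTop π).pow 2 |>.const_sub 1
  have wallis_factor : Tendsto (fun n : ℕ ↦ √((n : ℝ) / (n + 1 / 2))) atTop (𝓝 1) := by
    simpa using (tendsto_natCast_div_add_atTop (1 / 2 : ℝ)).sqrt
  simpa using (sinc_factor.comp tendsto_snd).mul (wallis_factor.comp tendsto_fst)

theorem stmt_3_general {ε : ℝ} (hε : 0 < ε) :
    ∃ R : ℝ, ∀ᶠ n : ℕ in atTop, ∀ A ≥ R, ∀ a : Fin n → ℝ, (∀ i, |a i| ≤ A) →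
      (1 - ε) * (1 / 2) * (1 / A) * (1 / √(π * n)) ≤
        ∫ x in {x : ℝ | |x| ≤ 1 / (4 * A)}, sinc2pi x ^ 2 * ∏ i, cos (2 * π * a i * x) ^ 2 := by
  have constant_ge :=
    tendsto_one_sub_sq_mul_sqrt_div_add_half.eventually_const_le (sub_lt_self 1 hε)
  obtain ⟨⟨N, R⟩, hNR⟩ := eventually_atTop.1 (constant_ge.and (eventually_ge_atTop (1, 1)))
  refine ⟨R, eventually_atTop.2 ⟨N, fun n hn A hA a ha ↦ ?_⟩⟩
  obtain ⟨constant_ge, n_pos : 1 ≤ n, one_le : 1 ≤ A⟩ := hNR (n, A) ⟨hn, hA⟩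
  have A_pos : 0 < A := one_pos.trans_le one_le
  have sqrt_eq : √(n / (n + 1 / 2)) * (1 / √(π * n)) = 1 / √(π * (n + 1 / 2)) := by
    rw [sqrt_div n.cast_nonneg, sqrt_mul pi_nonneg, sqrt_mul pi_nonneg]
    field_simp
  calc (1 - ε) * (1 / 2) * (1 / A) * (1 / √(π * n))
      ≤ ((1 - (π / (2 * A)) ^ 2) * √(n / (n + 1 / 2))) * (1 / 2) * (1 / A) * (1 / √(π * n)) := by
        gcongr
    _ = (1 - (π / (2 * A)) ^ 2) * (1 / 2) * (1 / A) * (1 / √(π * (n + 1 / 2))) := by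
        rw [← sqrt_eq]; ring
    _ ≤ _ := by simpa using le_setIntegral_sinc2pi_sq_mul_prod_cos_sq A_pos ha

theorem stmt_3 (ε : ℝ) (hε : 0 < ε) :
    ∃ N : ℕ, ∀ n : ℕ, N ≤ n → ∀ a : Fin n → ℝ, (∀ i, 0 < a i) →
      ∀ A : ℝ, IsGreatest (Set.range a) A → (2 : ℝ) ^ n / n ≤ A →
      (1 - ε) * (1 / 2) * (1 / A) * (1 / Real.sqrt (π * n)) ≤
        ∫ x in {x : ℝ | |x| ≤ 1 / (4 * A)},
          (sinc2pi x) ^ 2 * ∏ i, (Real.cos (2 * π * a i * x)) ^ 2 := by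
  obtain ⟨R, bound⟩ := stmt_3_general hε
  have threshold_ge := (tendsto_pow_div_natCast_atTop one_lt_two).eventually_ge_atTop R
  exact eventually_atTop.1 <| (bound.and threshold_ge).mono fun n ⟨hn, hR⟩ a ha A hA hAn ↦
    hn A (hR.trans hAn) a fun i ↦ (abs_of_pos (ha i)).trans_le (hA.2 ⟨i, rfl⟩)
end

section
/- Let n be a positive integer and let a : Fin n → ℝ have a i > 0 for all i, with 1-separated subset sums. Then ∑_{i=1}^{n} a_i² ≥ (4^n − 1)/3. -/
open Real Finset

/-- The subset sums of the family `a` are 1-separated. -/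
def SepSums {n : ℕ} (a : Fin n → ℝ) : Prop :=
  ∀ S T : Finset (Fin n), S ≠ T → 1 ≤ |∑ i ∈ S, a i - ∑ i ∈ T, a i|

/-!
The `2 ^ n` signed sums `∑ ± a i = 2 ∑ i ∈ S, a i - ∑ i, a i` have mean square `∑ a i ^ 2`.
Any two of them are at least 2 apart, and among `N` reals with consecutive gaps at least 2 the sum
of squares is smallest for `1 - N, 3 - N, …, N - 1`, where it is `N (N ^ 2 - 1) / 3`.
To see this, pair the `i`-th smallest with the `i`-th largest: if `x` and `y` are `d` apart, then
`x ^ 2 + y ^ 2 ≥ d ^ 2 / 2`, and the distances `d` are smallest for the extremal configuration.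
Taking `N = 2 ^ n` gives the mean square `(4 ^ n - 1) / 3`.
-/

theorem sum_powerset_two_mul_sum_sub_sum_sq {ι R : Type*} [CommRing R] (a : ι → R)
    (s : Finset ι) :
    ∑ S ∈ s.powerset, (2 * ∑ i ∈ S, a i - ∑ i ∈ s, a i) ^ 2 = 2 ^ #s * ∑ i ∈ s, a i ^ 2 := by
  classical
  induction s using Finset.induction_on with
  | empty => simp
  | insert x s hx ih =>
    have parallelogram (S) (hS : S ∈ s.powerset) :
        (2 * ∑ i ∈ S, a i - (a x + ∑ i ∈ s, a i)) ^ 2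
          + (2 * ∑ i ∈ insert x S, a i - (a x + ∑ i ∈ s, a i)) ^ 2
          = 2 * (2 * ∑ i ∈ S, a i - ∑ i ∈ s, a i) ^ 2 + 2 * a x ^ 2 := by
      rw [sum_insert fun hxS ↦ hx (mem_powerset.1 hS hxS)]
      ring
    rw [sum_powerset_insert hx, sum_insert hx, sum_insert hx, card_insert_of_notMem hx,
      ← sum_add_distrib, sum_congr rfl parallelogram, sum_add_distrib, ← mul_sum, ih, sum_const,
      card_powerset, nsmul_eq_mul]
    push_cast
    ring

theorem three_mul_sum_range_odd_sub_sq {R : Type*} [CommRing R] (n : ℕ) (c : R) :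
    3 * ∑ k ∈ range n, (2 * k + 1 - c) ^ 2 = n * (4 * n ^ 2 - 6 * c * n + 3 * c ^ 2 - 1) := by
  induction n with
  | zero => simp
  | succ n ih =>
    rw [sum_range_succ, mul_add, ih]
    push_cast
    ring

section Separated

variable {R : Type*} [CommRing R] [LinearOrder R] [IsStrictOrderedRing R] {δ : R}

theorem mul_sub_le_sub_of_monotone {n : ℕ} {e : Fin n → R} (he : Monotone e)
    (hsep : Pairwise fun i j ↦ δ ≤ |e i - e j|) {i j : Fin n} (hij : i ≤ j) :
    δ * ((j : ℕ) - (i : ℕ)) ≤ e j - e i := by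
  obtain _ | n := n
  · exact i.elim0
  have hmono : Monotone fun k : Fin (n + 1) ↦ e k - δ * (k : ℕ) := by
    refine Fin.monotone_iff_le_succ.2 fun k ↦ ?_
    have hgap : δ ≤ e k.succ - e k.castSucc := by
      simpa only [abs_of_nonneg (sub_nonneg.2 (he k.castSucc_lt_succ.le))]
        using hsep k.castSucc_lt_succ.ne'
    simp only [Fin.val_castSucc, Fin.val_succ, Nat.cast_succ]
    linarith
  linarith [hmono hij]

theorem sq_mul_sub_le_sq_sub_of_monotone {n : ℕ} {e : Fin n → R} (he : Monotone e) (hδ : 0 ≤ δ)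
    (hsep : Pairwise fun i j ↦ δ ≤ |e i - e j|) (i j : Fin n) :
    (δ * ((i : ℕ) - (j : ℕ))) ^ 2 ≤ (e i - e j) ^ 2 := by
  wlog hij : j ≤ i generalizing i j
  · linarith [this j i (le_of_not_ge hij)]
  have : (0 : R) ≤ (i : ℕ) - (j : ℕ) := sub_nonneg.2 (mod_cast hij)
  exact pow_le_pow_left₀ (by positivity) (mul_sub_le_sub_of_monotone he hsep hij) 2

theorem sq_mul_le_three_mul_sum_sq_of_monotone {n : ℕ} {e : Fin n → R} (he : Monotone e)
    (hδ : 0 ≤ δ) (hsep : Pairwise fun i j ↦ δ ≤ |e i - e j|) (c : R) :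
    δ ^ 2 * (n * (n ^ 2 - 1)) ≤ 3 * ∑ i, (2 * e i - c) ^ 2 := by
  have hpair (i : Fin n) : 2 * (δ ^ 2 * (2 * (i : ℕ) + 1 - n) ^ 2) ≤
      (2 * e i - c) ^ 2 + (2 * e i.rev - c) ^ 2 :=
    calc 2 * (δ ^ 2 * (2 * (i : ℕ) + 1 - n) ^ 2)
        = 2 * (δ * ((i : ℕ) - (i.rev : ℕ))) ^ 2 := by
          rw [Fin.val_rev, Nat.cast_sub i.is_lt, Nat.cast_succ]
          ring
      _ ≤ 2 * (e i - e i.rev) ^ 2 :=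
          mul_le_mul_of_nonneg_left (sq_mul_sub_le_sq_sub_of_monotone he hδ hsep i i.rev)
            zero_le_two
      _ ≤ (2 * e i - c) ^ 2 + (2 * e i.rev - c) ^ 2 := by
          linarith [sq_nonneg (e i + e i.rev - c)]
  have hrev : ∑ i : Fin n, (2 * e i.rev - c) ^ 2 = ∑ i, (2 * e i - c) ^ 2 :=
    Equiv.sum_comp Fin.revPerm fun i ↦ (2 * e i - c) ^ 2
  have hsum : δ ^ 2 * ∑ k ∈ range n, (2 * (k : R) + 1 - n) ^ 2 ≤ ∑ i, (2 * e i - c) ^ 2 := by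
    have := sum_le_sum fun i (_ : i ∈ univ) ↦ hpair i
    rw [sum_add_distrib, hrev, ← mul_sum, ← mul_sum,
      Fin.sum_univ_eq_sum_range fun k ↦ (2 * (k : R) + 1 - n) ^ 2] at this
    linarith
  calc δ ^ 2 * (n * (n ^ 2 - 1))
      = δ ^ 2 * (3 * ∑ k ∈ range n, (2 * (k : R) + 1 - n) ^ 2) := by
        rw [three_mul_sum_range_odd_sub_sq]
        ring
    _ ≤ 3 * ∑ i, (2 * e i - c) ^ 2 := by linarith

theorem sq_mul_le_three_mul_sum_sq_of_pairwise {α : Type*} [Fintype α] {f : α → R} (hδ : 0 ≤ δ)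
    (hsep : Pairwise fun x y ↦ δ ≤ |f x - f y|) (c : R) :
    δ ^ 2 * (Fintype.card α * (Fintype.card α ^ 2 - 1)) ≤ 3 * ∑ x, (2 * f x - c) ^ 2 := by
  let g := f ∘ (Fintype.equivFin α).symm
  let σ : Fin (Fintype.card α) ≃ α := (Tuple.sort g).trans (Fintype.equivFin α).symm
  rw [← σ.sum_comp]
  exact sq_mul_le_three_mul_sum_sq_of_monotone (Tuple.monotone_sort g) hδ
    (hsep.comp_of_injective σ.injective) c

theorem stmt_7_general {ι : Type*} [Fintype ι] {a : ι → R} (hδ : 0 ≤ δ)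
    (hsep : Pairwise fun S T : Finset ι ↦ δ ≤ |∑ i ∈ S, a i - ∑ i ∈ T, a i|) :
    δ ^ 2 * (4 ^ Fintype.card ι - 1) ≤ 3 * ∑ i, a i ^ 2 := by
  have hlower := sq_mul_le_three_mul_sum_sq_of_pairwise hδ hsep (∑ i, a i)
  rw [← powerset_univ, sum_powerset_two_mul_sum_sub_sum_sq, card_univ, Fintype.card_finset,
    Nat.cast_pow, Nat.cast_ofNat] at hlower
  have four_pow : (4 : R) ^ Fintype.card ι = (2 ^ Fintype.card ι) ^ 2 := by
    rw [pow_right_comm]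
    norm_num
  rw [four_pow]
  refine le_of_mul_le_mul_left ?_ (show (0 : R) < 2 ^ Fintype.card ι by positivity)
  linarith

end Separated

theorem stmt_7 (n : ℕ) (hn : 0 < n) (a : Fin n → ℝ) (ha : ∀ i, 0 < a i)
    (hsep : SepSums a) :
    ((4 : ℝ) ^ n - 1) / 3 ≤ ∑ i, (a i) ^ 2 := by
  have h := stmt_7_general zero_le_one hsep
  rw [Fintype.card_fin] at h
  linarith
end
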